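/- The direct parameterization is not a stable reparameterization: for the identity map f(w) = w restricted to w < 0, for every β > 0 the quantity sup_{w < −β} [ |w| · sup_{w̃ ∈ (w−β, w+β), w̃ < 0} ∫₀^∞ |e^{w̃ t} − e^{w t}| dt ] is infinite. More precisely, for 0 ≤ β < −w one has sup_{|w̃−w| ≤ β} ∫₀^∞ |e^{w̃ t} − e^{w t}| dt = β/((−w−β)(−w)), and |w| · β/((−w−β)(−w)) = β/(−w−β) → ∞ as w → (−β)⁻. -/

import Mathlib

open Set Filter

lemma aux_int_le (a b : ℝ) (hab : a ≤ b) (hb : b < 0) :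
    ∫ t in Ioi (0:ℝ), |Real.exp (b * t) - Real.exp (a * t)| = (b - a) / (a * b) := by
  have ha : a < 0 := by linarith
  have h1 : ∫ t in Ioi (0:ℝ), |Real.exp (b * t) - Real.exp (a * t)|
      = ∫ t in Ioi (0:ℝ), (Real.exp (b * t) - Real.exp (a * t)) := by
    apply MeasureTheory.setIntegral_congr_fun measurableSet_Ioi
    intro t ht
    have ht' : (0:ℝ) < t := ht
    apply abs_of_nonneg
    rw [sub_nonneg]
    apply Real.exp_le_exp.mpr
    exact mul_le_mul_of_nonneg_right hab ht'.le
  rw [h1, MeasureTheory.integral_sub (integrableOn_exp_mul_Ioi hb 0)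
    (integrableOn_exp_mul_Ioi ha 0), integral_exp_mul_Ioi hb, integral_exp_mul_Ioi ha]
  have := ha.ne
  have := hb.ne
  simp only [mul_zero, Real.exp_zero]
  field_simp
  ring

lemma aux_int (a b : ℝ) (ha : a < 0) (hb : b < 0) :
    ∫ t in Ioi (0:ℝ), |Real.exp (b * t) - Real.exp (a * t)| = |b - a| / (a * b) := by
  rcases le_total a b with h | h
  · rw [aux_int_le a b h hb, abs_of_nonneg (by linarith)]
  · simp_rw [abs_sub_comm (Real.exp (b * _)), abs_sub_comm b a]
    rw [aux_int_le b a h ha, abs_of_nonneg (by linarith), mul_comm]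

lemma aux_sup (w β : ℝ) (h0 : 0 ≤ β) (h : β < -w) :
    (⨆ wt : {x : ℝ // |x - w| ≤ β},
          ∫ t in Ioi (0:ℝ), |Real.exp ((wt : ℝ) * t) - Real.exp (w * t)|)
        = β / ((-w - β) * (-w)) := by
  have hw : w < 0 := by linarith
  have hle : ∀ wt : {x : ℝ // |x - w| ≤ β},
      ∫ t in Ioi (0:ℝ), |Real.exp ((wt : ℝ) * t) - Real.exp (w * t)|
        ≤ β / ((-w - β) * (-w)) := by
    rintro ⟨x, hx⟩
    have hx2 := abs_le.mp hx
    have hx0 : x < 0 := by linarith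
    rw [aux_int w x hw hx0]
    apply div_le_div₀ h0 hx
    · exact mul_pos (by linarith) (by linarith)
    · nlinarith
  have hmem : |(w + β) - w| ≤ β := by
    rw [add_sub_cancel_left, abs_of_nonneg h0]
  haveI : Nonempty {x : ℝ // |x - w| ≤ β} := ⟨⟨w + β, hmem⟩⟩
  apply le_antisymm (ciSup_le hle)
  have hbdd : BddAbove (range fun wt : {x : ℝ // |x - w| ≤ β} =>
      ∫ t in Ioi (0:ℝ), |Real.exp ((wt : ℝ) * t) - Real.exp (w * t)|) :=
    ⟨_, by rintro _ ⟨y, rfl⟩; exact hle y⟩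
  refine le_trans (le_of_eq ?_) (le_ciSup hbdd ⟨w + β, hmem⟩)
  show _ = ∫ t in Ioi (0:ℝ), |Real.exp ((w + β) * t) - Real.exp (w * t)|
  rw [aux_int w (w + β) hw (by linarith), add_sub_cancel_left, abs_of_nonneg h0]
  congr 1
  ring

lemma aux_mul (w β : ℝ) (h0 : 0 ≤ β) (h : β < -w) :
    |w| * (β / ((-w - β) * (-w))) = β / (-w - β) := by
  have hw : w < 0 := by linarith
  have h1 : -w ≠ 0 := by linarith
  have h2 : -w - β ≠ 0 := by linarith
  rw [abs_of_neg hw, mul_div_assoc', mul_comm (-w) β, mul_div_mul_right _ _ h1]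

lemma aux_tendsto (β : ℝ) (hβ : 0 < β) :
    Tendsto (fun w : ℝ => β / (-w - β)) (nhdsWithin (-β) (Iio (-β))) atTop := by
  simp_rw [div_eq_mul_inv]
  apply Tendsto.const_mul_atTop hβ
  apply tendsto_inv_nhdsGT_zero.comp
  apply tendsto_nhdsWithin_iff.mpr
  constructor
  · have : Continuous fun w : ℝ => -w - β := by fun_prop
    have h := this.tendsto (-β)
    simp only [neg_neg, sub_self] at h
    exact h.mono_left nhdsWithin_le_nhds
  · filter_upwards [self_mem_nhdsWithin] with w hw
    have : w < -β := hw
    show (0:ℝ) < -w - β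
    linarith

/-- The direct parameterization `f(w) = w` (for `w < 0`) is not stable: for `0 ≤ β < −w`,
`sup_{|w' − w| ≤ β} ∫₀^∞ |e^{w' t} − e^{w t}| dt = β/((−w−β)(−w))`, so that
`|w| ⬝ β/((−w−β)(−w)) = β/(−w−β)`, which tends to `∞` as `w → (−β)⁻`; in particular the
supremum over `w < −β` of the stability quantity is infinite. -/
theorem stmt9 :
    (∀ w β : ℝ, 0 ≤ β → β < -w →
      ((⨆ wt : {x : ℝ // |x - w| ≤ β},
          ∫ t in Ioi (0:ℝ), |Real.exp ((wt : ℝ) * t) - Real.exp (w * t)|)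
        = β / ((-w - β) * (-w))) ∧
      |w| * (β / ((-w - β) * (-w))) = β / (-w - β)) ∧
    (∀ β : ℝ, 0 < β →
      Tendsto (fun w : ℝ => β / (-w - β)) (nhdsWithin (-β) (Iio (-β))) atTop) ∧
    (∀ β : ℝ, 0 < β → ∀ M : ℝ, ∃ w : ℝ, w < -β ∧
      M < |w| *
        (⨆ wt : {x : ℝ // |x - w| ≤ β},
          ∫ t in Ioi (0:ℝ), |Real.exp ((wt : ℝ) * t) - Real.exp (w * t)|)) := by
  refine ⟨fun w β h0 h => ⟨aux_sup w β h0 h, aux_mul w β h0 h⟩, aux_tendsto, ?_⟩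
  intro β hβ M
  obtain ⟨w, hM, hw⟩ :=
    (((aux_tendsto β hβ).eventually_gt_atTop M).and self_mem_nhdsWithin).exists
  have hw' : w < -β := hw
  refine ⟨w, hw', ?_⟩
  rw [aux_sup w β hβ.le (by linarith), aux_mul w β hβ.le (by linarith)]
  exact hM
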